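/- Let ℭ = ({0,1,2}; C_3, U) with U := {0,1} (a unary relation), and let 𝔄 be the structure with domain {0,1,2}^4 (coordinates indexed 0,1,2,3) and relations C_3^A := {(x,y) : (x_0,y_0) ∈ C_3, x_1=y_2, x_2=y_3, x_3=y_1} and R^A := {(x_0,x_1,x_2,x_3) : x_0=x_1 and x_3=1}. Then the map g with g(0)=(0,0,1,1), g(1)=(1,1,0,1), g(2)=(2,1,1,0) is a homomorphism from ℭ to 𝔄, and the map h defined by h(x_0,x_1,x_2,x_3) = x_0 − 1 (mod 3) if (x_1,x_2,x_3) ∈ A_1 := {(1,1,2),(1,2,1),(2,1,1)}, h(x_0,x_1,x_2,x_3) = x_0 if (x_1,x_2,x_3) ∈ A_2 := {(0,1,1),(1,0,1),(1,1,0),(1,1,1)}, and h(x_0,x_1,x_2,x_3) = x_0 + 1 (mod 3) otherwise, is a homomorphism from 𝔄 to ℭ. In particular ℭ and 𝔄 are homomorphically equivalent. -/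

import Mathlib

/-- The three-element domain `{0,1,2}`. -/
abbrev D3 : Type := Fin 3

/-- `C₃ = {(0,1),(1,2),(2,0)}`. -/
def C3P (a b : D3) : Prop := (a = 0 ∧ b = 1) ∨ (a = 1 ∧ b = 2) ∨ (a = 2 ∧ b = 0)

/-- The unary relation `U = {0,1}`. -/
def UP (a : D3) : Prop := a = 0 ∨ a = 1

/-- The relation `C₃^𝔄` on `{0,1,2}⁴`. -/
def C3A (x y : Fin 4 → D3) : Prop :=
  C3P (x 0) (y 0) ∧ x 1 = y 2 ∧ x 2 = y 3 ∧ x 3 = y 1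

/-- The unary relation `R^𝔄` on `{0,1,2}⁴`. -/
def RA (x : Fin 4 → D3) : Prop := x 0 = x 1 ∧ x 3 = 1

/-- The map `g` with `g(0) = (0,0,1,1)`, `g(1) = (1,1,0,1)`, `g(2) = (2,1,1,0)`. -/
def gMap : D3 → Fin 4 → D3 := ![![0,0,1,1], ![1,1,0,1], ![2,1,1,0]]

/-- The map `h`: subtract `1` from `x₀` (mod 3) if `(x₁,x₂,x₃) ∈ A₁`, keep `x₀` if
`(x₁,x₂,x₃) ∈ A₂`, and add `1` (mod 3) otherwise. -/
def hMap (x : Fin 4 → D3) : D3 :=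
  if (x 1, x 2, x 3) = ((1 : D3), (1 : D3), (2 : D3)) ∨
     (x 1, x 2, x 3) = ((1 : D3), (2 : D3), (1 : D3)) ∨
     (x 1, x 2, x 3) = ((2 : D3), (1 : D3), (1 : D3)) then x 0 - 1
  else if (x 1, x 2, x 3) = ((0 : D3), (1 : D3), (1 : D3)) ∨
          (x 1, x 2, x 3) = ((1 : D3), (0 : D3), (1 : D3)) ∨
          (x 1, x 2, x 3) = ((1 : D3), (1 : D3), (0 : D3)) ∨
          (x 1, x 2, x 3) = ((1 : D3), (1 : D3), (1 : D3)) then x 0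
  else x 0 + 1

/-- `g` is a homomorphism from `ℭ = ({0,1,2}; C₃, U)` to `𝔄`. -/
def IsHomCtoA (g : D3 → Fin 4 → D3) : Prop :=
  (∀ a b : D3, C3P a b → C3A (g a) (g b)) ∧
  (∀ a : D3, UP a → RA (g a))

/-- `h` is a homomorphism from `𝔄` to `ℭ`. -/
def IsHomAtoC (h : (Fin 4 → D3) → D3) : Prop :=
  (∀ x y : Fin 4 → D3, C3A x y → C3P (h x) (h y)) ∧
  (∀ x : Fin 4 → D3, RA x → UP (h x))

theorem hom_g : IsHomCtoA gMap := by
  unfold IsHomCtoA C3A RA C3P UP gMap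
  decide

theorem hom_h : IsHomAtoC hMap := by
  constructor
  · intro x y
    unfold C3A hMap
    rintro ⟨h0, h1, h2, h3⟩
    rw [h1, h2, h3]
    generalize x 0 = a at *
    generalize y 0 = b at *
    generalize y 1 = c at *
    generalize y 2 = d at *
    generalize y 3 = e at *
    clear h1 h2 h3
    unfold C3P at *
    revert a b c d e
    decide +kernel
  · intro x
    unfold RA hMap UP
    generalize x 0 = a
    generalize x 1 = b
    generalize x 2 = c
    generalize x 3 = d
    revert a b c d
    decide +kernel

theorem stmt12 :
    IsHomCtoA gMap ∧ IsHomAtoC hMap ∧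
    (∃ (g : D3 → Fin 4 → D3) (h : (Fin 4 → D3) → D3), IsHomCtoA g ∧ IsHomAtoC h) := by
  exact ⟨hom_g, hom_h, gMap, hMap, hom_g, hom_h⟩
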